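/- Let ℳ be the 2×2 real matrix with first row (F_H(U_D,H_D), F_U(U_D,H_D)) and second row (G_H(U_D,H_D), G_U(U_D,H_D)), and set λ₁ = 2(γ−1)(μ−1)/(3−γ), λ₂ = ((3−γ)μ − γ − 1)/(3−γ), C₁ = (γ−1)²/(3−γ), C₂ = (γ−1)·(−(γ−3)²μ + γ²−2γ+5)/(2(3−γ)·((γ−3)μ+2)). Then ℳ·(C₂,1)ᵀ = λ₁·(C₂,1)ᵀ and ℳ·(C₁,1)ᵀ = λ₂·(C₁,1)ᵀ, i.e. λ₁ and λ₂ are eigenvalues of ℳ with eigenvectors (C₂,1)ᵀ and (C₁,1)ᵀ respectively, and moreover λ₂ < λ₁ < 0. -/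

import Mathlib

noncomputable def k₁ (γ μ : ℝ) : ℝ := ((γ + 1) + μ * (3 - γ)) / 2
noncomputable def k₂ (γ μ : ℝ) : ℝ := 2 * (1 - μ) / (γ - 1)
noncomputable def FH (γ μ U H : ℝ) : ℝ := 4 * H - 2 * (U ^ 2 - k₁ γ μ * U + μ)
noncomputable def FU (γ μ U H : ℝ) : ℝ := -2 * H * (2 * U - k₁ γ μ)
noncomputable def GH (γ μ U H : ℝ) : ℝ := U + k₂ γ μ
noncomputable def GU (γ μ U H : ℝ) : ℝ := H - 3 * U ^ 2 + 2 * (1 + μ) * U - μ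
noncomputable def UD (γ : ℝ) : ℝ := 2 / (3 - γ)
noncomputable def HD (γ : ℝ) : ℝ := ((γ - 1) / (3 - γ)) ^ 2
/-- The Jacobian matrix `ℳ` of `(F,G)` in `(H,U)` at the point `D`. -/
noncomputable def MatD (γ μ : ℝ) : Matrix (Fin 2) (Fin 2) ℝ :=
  !![FH γ μ (UD γ) (HD γ), FU γ μ (UD γ) (HD γ);
     GH γ μ (UD γ) (HD γ), GU γ μ (UD γ) (HD γ)]
noncomputable def lam₁ (γ μ : ℝ) : ℝ := 2 * (γ - 1) * (μ - 1) / (3 - γ)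
noncomputable def lam₂ (γ μ : ℝ) : ℝ := ((3 - γ) * μ - γ - 1) / (3 - γ)
noncomputable def C₁D (γ : ℝ) : ℝ := (γ - 1) ^ 2 / (3 - γ)
noncomputable def C₂D (γ μ : ℝ) : ℝ :=
  (γ - 1) * (-(γ - 3) ^ 2 * μ + γ ^ 2 - 2 * γ + 5) / (2 * (3 - γ) * ((γ - 3) * μ + 2))

/-!
In terms of `U = U_D` alone, `H_D = (U - 1)²`, `U (γ - 1) = 2 (U - 1)`, `λ₁ = 2 (U - 1) (μ - 1)` and
`λ₂ = μ + 1 - 2 U`. As `D` lies on the branch `H = U² - k₁ U + μ` of the curve `F = 0`, the top left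
entry of `ℳ` is `2 H_D`, and `ℳ (C₁, 1)ᵀ = λ₂ (C₁, 1)ᵀ` is checked row by row. Since
`tr ℳ = λ₁ + λ₂`, the vector `(x, 1)ᵀ` with `G_H x = F_H - λ₂` then belongs to `λ₁`, and that `x` is
`C₂`. Finally, `λ₁ - λ₂ = 2 (U - 1) μ + (1 - μ)`.
-/

theorem mulVec_vec_one_eq_smul_iff {R : Type*} [NonAssocSemiring R]
    (A : Matrix (Fin 2) (Fin 2) R) (x l : R) :
    A.mulVec ![x, 1] = l • ![x, 1] ↔ A 0 0 * x + A 0 1 = l * x ∧ A 1 0 * x + A 1 1 = l := by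
  simp [funext_iff, Fin.forall_fin_two, Matrix.mulVec, dotProduct, Fin.sum_univ_two]

theorem mulVec_vec_one_eq_smul_of_trace_eq {R : Type*} [CommRing R]
    {A : Matrix (Fin 2) (Fin 2) R} {x y l m : R} (hy : A.mulVec ![y, 1] = m • ![y, 1])
    (htr : A.trace = l + m) (hx : A 1 0 * x = A 0 0 - m) :
    A.mulVec ![x, 1] = l • ![x, 1] := by
  obtain ⟨htop, hbot⟩ := (mulVec_vec_one_eq_smul_iff A y m).1 hy
  rw [Matrix.trace_fin_two] at htr
  refine (mulVec_vec_one_eq_smul_iff A x l).2 ⟨?_, ?_⟩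
  · linear_combination htop + x * htr - x * hbot + y * hx
  · linear_combination hx + htr

section CriticalPoint

variable {γ : ℝ} (μ : ℝ)

theorem UD_sub_one (hγ : γ ≠ 3) : UD γ - 1 = (γ - 1) / (3 - γ) := by
  have h3 : 3 - γ ≠ 0 := sub_ne_zero.2 hγ.symm
  rw [UD]
  field_simp
  ring

theorem one_lt_UD (hγ1 : 1 < γ) (hγ3 : γ < 3) : 1 < UD γ := by
  rw [← sub_pos, UD_sub_one hγ3.ne]
  exact div_pos (sub_pos.2 hγ1) (sub_pos.2 hγ3)

theorem HD_eq_UD_sub_one_sq (hγ : γ ≠ 3) : HD γ = (UD γ - 1) ^ 2 := by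
  rw [HD, UD_sub_one hγ]

theorem UD_mul_sub_one (hγ : γ ≠ 3) : UD γ * (γ - 1) = 2 * (UD γ - 1) := by
  rw [UD_sub_one hγ, UD]
  ring

theorem k₁_mul_UD (hγ : γ ≠ 3) : k₁ γ μ * UD γ = 2 * UD γ - 1 + μ := by
  have h3 : 3 - γ ≠ 0 := sub_ne_zero.2 hγ.symm
  rw [k₁, UD]
  field_simp
  ring

theorem HD_eq_UD_sq_sub_k₁_mul_UD_add (hγ : γ ≠ 3) :
    HD γ = UD γ ^ 2 - k₁ γ μ * UD γ + μ := by
  rw [HD_eq_UD_sub_one_sq hγ, k₁_mul_UD μ hγ]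
  ring

theorem FH_UD_HD (hγ : γ ≠ 3) : FH γ μ (UD γ) (HD γ) = 2 * HD γ := by
  rw [FH, ← HD_eq_UD_sq_sub_k₁_mul_UD_add μ hγ]
  ring

theorem sub_one_mul_GH_UD_HD (hγ1 : γ ≠ 1) (hγ3 : γ ≠ 3) :
    (γ - 1) * GH γ μ (UD γ) (HD γ) = 2 * (UD γ - μ) := by
  have hk₂ : (γ - 1) * k₂ γ μ = 2 * (1 - μ) := mul_div_cancel₀ _ (sub_ne_zero.2 hγ1)
  rw [GH]
  linear_combination UD_mul_sub_one hγ3 + hk₂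

theorem GU_UD_HD (hγ : γ ≠ 3) :
    GU γ μ (UD γ) (HD γ) = 2 * μ * UD γ - 2 * UD γ ^ 2 + 1 - μ := by
  rw [GU, HD_eq_UD_sub_one_sq hγ]
  ring

theorem lam₁_eq_UD_sub_one_mul (hγ : γ ≠ 3) : lam₁ γ μ = 2 * (UD γ - 1) * (μ - 1) := by
  rw [lam₁, UD_sub_one hγ]
  ring

theorem lam₂_eq_sub_two_mul_UD (hγ : γ ≠ 3) : lam₂ γ μ = μ + 1 - 2 * UD γ := by
  have h3 : 3 - γ ≠ 0 := sub_ne_zero.2 hγ.symm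
  rw [lam₂, UD]
  field_simp
  ring

theorem lam₁_sub_lam₂ (hγ : γ ≠ 3) :
    lam₁ γ μ - lam₂ γ μ = 2 * (UD γ - 1) * μ + (1 - μ) := by
  rw [lam₁_eq_UD_sub_one_mul μ hγ, lam₂_eq_sub_two_mul_UD μ hγ]
  ring

theorem C₁D_eq_mul_UD_sub_one (hγ : γ ≠ 3) : C₁D γ = (γ - 1) * (UD γ - 1) := by
  rw [C₁D, UD_sub_one hγ]
  ring

theorem C₂D_eq_div_UD_sub (hγ : γ ≠ 3) :
    C₂D γ μ = (γ - 1) * (2 * UD γ * (UD γ - 1) + 1 - μ) / (2 * (UD γ - μ)) := by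
  have h3 : 3 - γ ≠ 0 := sub_ne_zero.2 hγ.symm
  have hnum : -(γ - 3) ^ 2 * μ + γ ^ 2 - 2 * γ + 5 =
      (3 - γ) ^ 2 * (2 * UD γ * (UD γ - 1) + 1 - μ) := by
    rw [UD]
    field_simp
    ring
  have hden : (γ - 3) * μ + 2 = (3 - γ) * (UD γ - μ) := by
    rw [UD]
    field_simp
    ring
  rw [C₂D, hnum, hden]
  field_simp

theorem trace_MatD (hγ : γ ≠ 3) : (MatD γ μ).trace = lam₁ γ μ + lam₂ γ μ := by
  rw [MatD, Matrix.trace_fin_two_of, FH_UD_HD μ hγ, GU_UD_HD μ hγ, HD_eq_UD_sub_one_sq hγ,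
    lam₁_eq_UD_sub_one_mul μ hγ, lam₂_eq_sub_two_mul_UD μ hγ]
  ring

theorem FU_UD_HD (hγ : γ ≠ 3) :
    FU γ μ (UD γ) (HD γ) = (lam₂ γ μ - 2 * HD γ) * C₁D γ := by
  have hU : UD γ ≠ 0 := div_ne_zero two_ne_zero (sub_ne_zero.2 hγ.symm)
  refine mul_left_cancel₀ hU ?_
  rw [FU, lam₂_eq_sub_two_mul_UD μ hγ, C₁D_eq_mul_UD_sub_one hγ, HD_eq_UD_sub_one_sq hγ]
  linear_combination 2 * (UD γ - 1) ^ 2 * k₁_mul_UD μ hγ -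
    (μ + 1 - 2 * UD γ - 2 * (UD γ - 1) ^ 2) * (UD γ - 1) * UD_mul_sub_one hγ

theorem MatD_mulVec_C₁D (hγ1 : γ ≠ 1) (hγ3 : γ ≠ 3) :
    (MatD γ μ).mulVec ![C₁D γ, 1] = lam₂ γ μ • ![C₁D γ, 1] := by
  refine (mulVec_vec_one_eq_smul_iff _ _ _).2 ⟨?_, ?_⟩
  · change FH γ μ (UD γ) (HD γ) * C₁D γ + FU γ μ (UD γ) (HD γ) = lam₂ γ μ * C₁D γ
    rw [FH_UD_HD μ hγ3, FU_UD_HD μ hγ3]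
    ring
  · change GH γ μ (UD γ) (HD γ) * C₁D γ + GU γ μ (UD γ) (HD γ) = lam₂ γ μ
    rw [GU_UD_HD μ hγ3, C₁D_eq_mul_UD_sub_one hγ3, lam₂_eq_sub_two_mul_UD μ hγ3]
    linear_combination (UD γ - 1) * sub_one_mul_GH_UD_HD μ hγ1 hγ3

variable {μ}

theorem GH_UD_HD_mul_C₂D (hγ1 : γ ≠ 1) (hγ3 : γ ≠ 3) (hμ : UD γ ≠ μ) :
    GH γ μ (UD γ) (HD γ) * C₂D γ μ = FH γ μ (UD γ) (HD γ) - lam₂ γ μ := by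
  have hU : UD γ - μ ≠ 0 := sub_ne_zero.2 hμ
  calc
    GH γ μ (UD γ) (HD γ) * C₂D γ μ
      = (γ - 1) * GH γ μ (UD γ) (HD γ) *
          (2 * UD γ * (UD γ - 1) + 1 - μ) / (2 * (UD γ - μ)) := by
        rw [C₂D_eq_div_UD_sub μ hγ3]
        ring
    _ = 2 * UD γ * (UD γ - 1) + 1 - μ := by
        rw [sub_one_mul_GH_UD_HD μ hγ1 hγ3]
        exact mul_div_cancel_left₀ _ (mul_ne_zero two_ne_zero hU)
    _ = FH γ μ (UD γ) (HD γ) - lam₂ γ μ := by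
        rw [FH_UD_HD μ hγ3, HD_eq_UD_sub_one_sq hγ3, lam₂_eq_sub_two_mul_UD μ hγ3]
        ring

theorem MatD_mulVec_C₂D (hγ1 : γ ≠ 1) (hγ3 : γ ≠ 3) (hμ : UD γ ≠ μ) :
    (MatD γ μ).mulVec ![C₂D γ μ, 1] = lam₁ γ μ • ![C₂D γ μ, 1] :=
  mulVec_vec_one_eq_smul_of_trace_eq (MatD_mulVec_C₁D μ hγ1 hγ3) (trace_MatD μ hγ3)
    (GH_UD_HD_mul_C₂D hγ1 hγ3 hμ)

theorem lam₁_neg (hγ1 : 1 < γ) (hγ3 : γ < 3) (hμ : μ < 1) : lam₁ γ μ < 0 := by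
  rw [lam₁_eq_UD_sub_one_mul μ hγ3.ne]
  have hU : 0 < UD γ - 1 := sub_pos.2 (one_lt_UD hγ1 hγ3)
  exact mul_neg_of_pos_of_neg (mul_pos two_pos hU) (sub_neg.2 hμ)

theorem lam₂_lt_lam₁ (hγ1 : 1 < γ) (hγ3 : γ < 3) (hμ0 : 0 ≤ μ) (hμ1 : μ ≤ 1) :
    lam₂ γ μ < lam₁ γ μ := by
  have hU : 0 < UD γ - 1 := sub_pos.2 (one_lt_UD hγ1 hγ3)
  rw [← sub_pos, lam₁_sub_lam₂ μ hγ3.ne]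
  rcases hμ0.eq_or_lt with rfl | hμ
  · simp only [mul_zero, sub_zero, zero_add, zero_lt_one]
  · exact add_pos_of_pos_of_nonneg (mul_pos (mul_pos two_pos hU) hμ) (sub_nonneg.2 hμ1)

end CriticalPoint

/-- `λ₁, λ₂` are eigenvalues of `ℳ` with eigenvectors `(C₂,1)ᵀ`, `(C₁,1)ᵀ`,
and `λ₂ < λ₁ < 0`. -/
theorem stmt9 (γ μ : ℝ) (hγ1 : 1 < γ) (hγ3 : γ < 3) (hμ0 : 0 < μ) (hμ1 : μ < 1) :
    (MatD γ μ).mulVec ![C₂D γ μ, 1] = lam₁ γ μ • ![C₂D γ μ, 1] ∧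
    (MatD γ μ).mulVec ![C₁D γ, 1] = lam₂ γ μ • ![C₁D γ, 1] ∧
    lam₂ γ μ < lam₁ γ μ ∧ lam₁ γ μ < 0 := by
  have hU : UD γ ≠ μ := (hμ1.trans (one_lt_UD hγ1 hγ3)).ne'
  exact ⟨MatD_mulVec_C₂D hγ1.ne' hγ3.ne hU, MatD_mulVec_C₁D μ hγ1.ne' hγ3.ne,
    lam₂_lt_lam₁ hγ1 hγ3 hμ0.le hμ1.le, lam₁_neg hγ1 hγ3 hμ1⟩
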